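/- arXiv:math/0610511 — 2 statements merged into one kernel-verified Lean document; each statement's English description precedes it below -/
import Mathlib

section
/- Let d ≥ 1 be a positive integer and let {X_n : n ∈ ℕ^d} be a negatively associated field of identically distributed random variables. If P( limsup_{n → ∞} |S_n| / (2d |n| log log |n|)^{1/2} < ∞ ) > 0, then E[X_1] = 0 and E[X_1² log^{d-1}(|X_1|) / log log (|X_1|)] < ∞. -/
/-!
If the limsup is finite with positive probability, then for some constants `M`, `N` the event `F`
that `|S_n| ≤ M a_n` for all `n` with coordinates beyond `N` has positive probability, where
`a_n = √(2 d |n| log log |n|)` (`lilNorm`). A single `X_n` is a signed sum of `2^d` of the partial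
sums `S_m` (`abs_term_le`), so `|X_n| ≤ 2^d M a_n` on `F` as well.

Moment condition. Negative association gives `P(X_i ≤ t_i for all i) ≤ ∏ P(X_i ≤ t_i)`, hence
`P(F) ≤ exp (-∑ P(X_n > 2^d M a_n))`, and the same for `-X`. Therefore `∑_n P(|X_1| > 2^d M a_n)`
converges (`NegAssocOn.sum_tail_le`). This sum is the expected number of `n` with
`2^d M a_n < |X_1|`, and that number is at least a constant times
`X_1² log^{d-1} |X_1| / log log |X_1|` for large `|X_1|`, because at least `c x log^{d-1} x` lattice
points satisfy `|n| ≤ x` (`count_lower`, `moment_pointwise`).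

Mean zero. The moment condition implies integrability. Truncation is monotone, so truncated
variables are pairwise non-positively correlated and Chebyshev's argument yields an `L¹` weak law
(`weak_law`). Since `S_n / |n| → 0` on `F` along the diagonal and `P(F) > 0`, the mean is zero
(`mean_zero`).
-/

open MeasureTheory Filter Finset

noncomputable section

/-- `plog x = ln (max x e)`, the truncated logarithm used in the paper. -/
def plog (x : ℝ) : ℝ := Real.log (max x (Real.exp 1))

/-- A family of real random variables `X i`, `i ∈ S`, is *negatively associated* if for every
pair of disjoint finite subsets `A`, `B` of `S` and all coordinatewise non-decreasing functions
`f`, `g`, one has `Cov (f (X_i, i ∈ A), g (X_j, j ∈ B)) ≤ 0`, whenever the covariance exists. -/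
def NegAssocOn {Ω : Type} [MeasurableSpace Ω] (μ : Measure Ω) {ι : Type}
    (X : ι → Ω → ℝ) (S : Set ι) : Prop :=
  ∀ A B : Finset ι, ↑A ⊆ S → ↑B ⊆ S → Disjoint A B →
    ∀ (f : (↥A → ℝ) → ℝ) (g : (↥B → ℝ) → ℝ), Monotone f → Monotone g →
      Integrable (fun ω => f (fun i => X i ω)) μ →
      Integrable (fun ω => g (fun j => X j ω)) μ →
      Integrable (fun ω => f (fun i => X i ω) * g (fun j => X j ω)) μ →
      ∫ ω, f (fun i => X i ω) * g (fun j => X j ω) ∂μ ≤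
        (∫ ω, f (fun i => X i ω) ∂μ) * ∫ ω, g (fun j => X j ω) ∂μ

/-! ### The truncated logarithm -/

lemma one_le_plog (x : ℝ) : 1 ≤ plog x := by
  have h : Real.log (Real.exp 1) ≤ plog x :=
    Real.log_le_log (Real.exp_pos 1) (le_max_right _ _)
  simpa using h

lemma plog_pos (x : ℝ) : 0 < plog x := lt_of_lt_of_le one_pos (one_le_plog x)

lemma plog_mono : Monotone plog := fun _ _ h =>
  Real.log_le_log (lt_of_lt_of_le (Real.exp_pos 1) (le_max_right _ _)) (max_le_max_right _ h)

lemma measurable_plog : Measurable plog :=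
  Real.measurable_log.comp (measurable_id.max measurable_const)

lemma plog_eq_max {x : ℝ} (hx : 0 < x) : plog x = max (Real.log x) 1 := by
  have h := Real.strictMonoOn_log.monotoneOn.map_max (a := x) (b := Real.exp 1) hx (Real.exp_pos 1)
  simpa [plog] using h

lemma log_le_plog {x : ℝ} (hx : 0 < x) : Real.log x ≤ plog x := by
  rw [plog_eq_max hx]; exact le_max_left _ _

lemma plog_le_self {x : ℝ} (hx : 1 ≤ x) : plog x ≤ x := by
  rw [plog_eq_max (by linarith)]
  exact max_le (by linarith [Real.log_le_sub_one_of_pos (show 0 < x by linarith)]) hx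

lemma plog_sq_le {x : ℝ} (hx : 0 < x) : plog (x ^ 2) ≤ 2 * plog x := by
  rw [plog_eq_max (by positivity), plog_eq_max hx, Real.log_pow]
  push_cast
  have h1 := le_max_left (Real.log x) 1
  have h2 := le_max_right (Real.log x) 1
  exact max_le (by linarith) (by linarith)

lemma plog_two_mul_le {x : ℝ} (hx : 0 < x) : plog (2 * x) ≤ 2 * plog x := by
  rw [plog_eq_max (by positivity), plog_eq_max hx, Real.log_mul (by norm_num) hx.ne']
  have h1 := le_max_left (Real.log x) 1
  have h2 := le_max_right (Real.log x) 1
  have h3 : Real.log 2 ≤ 1 := by linarith [Real.log_two_lt_d9]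
  exact max_le (by linarith) (by linarith)

lemma plog_le_two_mul_sqrt {x : ℝ} (hx : 1 ≤ x) : plog x ≤ 2 * √x := by
  have h1 : 1 ≤ √x := by simpa using Real.sqrt_le_sqrt hx
  have h2 : plog x ≤ 2 * plog (√x) := by
    have := plog_sq_le (show 0 < √x by linarith)
    rwa [Real.sq_sqrt (by linarith)] at this
  linarith [plog_le_self h1]

/-! ### Counting lattice points under a hyperbola -/

/-- The harmonic sum over `[N, ⌊√x⌋]` is at least a quarter of `log x` for large `x`. -/
lemma harmonic_lower (N : ℕ) {x : ℝ} (hx : Real.exp (4 * N + 1) ≤ x) :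
    plog x / 4 ≤ ∑ k ∈ Finset.Icc N ⌊√x⌋₊, (1 / (k : ℝ)) := by
  have hx0 : 0 < x := lt_of_lt_of_le (Real.exp_pos _) hx
  have hlog : 4 * N + 1 ≤ Real.log x := (Real.le_log_iff_exp_le hx0).2 hx
  have hp : plog x = Real.log x := by
    rw [plog_eq_max hx0]; exact max_eq_left (by linarith [(Nat.cast_nonneg N : (0 : ℝ) ≤ N)])
  have hs : 0 < √x := Real.sqrt_pos.2 hx0
  set K := ⌊√x⌋₊ with hK
  have h1 : Real.log (√x) ≤ harmonic K :=
    (Real.log_le_log hs (by push_cast; exact (Nat.lt_floor_add_one _).le)).trans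
      (log_add_one_le_harmonic K)
  have h2 : (harmonic K : ℝ) = ∑ k ∈ Finset.Icc 1 K, (1 / (k : ℝ)) := by
    rw [harmonic_eq_sum_Icc]; push_cast; simp
  have h3 : ∑ k ∈ Finset.Icc 1 K, (1 / (k : ℝ)) ≤
      ∑ k ∈ Finset.Icc 1 N, (1 / (k : ℝ)) + ∑ k ∈ Finset.Icc N K, (1 / (k : ℝ)) := by
    have hsub : Finset.Icc 1 K ⊆ Finset.Icc 1 N ∪ Finset.Icc N K := by
      intro k hk; simp only [Finset.mem_union, Finset.mem_Icc] at *; omega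
    refine (Finset.sum_le_sum_of_subset_of_nonneg hsub (fun _ _ _ => by positivity)).trans ?_
    have := Finset.sum_union_inter (s₁ := Finset.Icc 1 N) (s₂ := Finset.Icc N K)
      (f := fun k : ℕ => (1 / (k : ℝ)))
    have h0 : 0 ≤ ∑ k ∈ Finset.Icc 1 N ∩ Finset.Icc N K, (1 / (k : ℝ)) :=
      Finset.sum_nonneg (fun _ _ => by positivity)
    linarith
  have h4 : ∑ k ∈ Finset.Icc 1 N, (1 / (k : ℝ)) ≤ N := by
    refine (Finset.sum_le_card_nsmul _ _ 1 ?_).trans (by simp)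
    intro k hk
    have : (1 : ℝ) ≤ k := by exact_mod_cast (Finset.mem_Icc.1 hk).1
    rw [div_le_one (by linarith)]; exact this
  rw [Real.log_sqrt hx0.le] at h1
  rw [hp]
  linarith

/-- Lower bound of the right order for the hyperbolic lattice-point count: there are at least
`c x log^d x` points `n ∈ ℕ^{d+1}` with all coordinates `≥ N` and product `≤ x`. -/
lemma count_lower (N : ℕ) (hN : 1 ≤ N) (d : ℕ) : ∃ c > 0, ∃ x₀ : ℝ, ∀ x ≥ x₀,
    ∃ s : Finset (Fin (d + 1) → ℕ),
      (∀ n ∈ s, (∀ i, N ≤ n i) ∧ ∏ i, (n i : ℝ) ≤ x) ∧ c * (x * plog x ^ d) ≤ (s.card : ℝ) := by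
  induction d with
  | zero =>
    refine ⟨1 / 2, by norm_num, 2 * N, fun x hx => ?_⟩
    have hN' : (1 : ℝ) ≤ N := by exact_mod_cast hN
    refine ⟨(Finset.Icc N ⌊x⌋₊).image (fun k _ => k), ?_, ?_⟩
    · intro n hn
      obtain ⟨k, hk, rfl⟩ := Finset.mem_image.1 hn
      rw [Finset.mem_Icc] at hk
      refine ⟨fun _ => hk.1, ?_⟩
      simpa using (Nat.le_floor_iff (by linarith)).1 hk.2
    · rw [Finset.card_image_of_injective _ (fun a b h => congrFun h 0), Nat.card_Icc]
      have h1 : x < ⌊x⌋₊ + 1 := Nat.lt_floor_add_one x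
      have h2 : (⌊x⌋₊ : ℝ) + 1 ≤ ((⌊x⌋₊ + 1 - N : ℕ) : ℝ) + N := by
        exact_mod_cast (by omega : ⌊x⌋₊ + 1 ≤ ⌊x⌋₊ + 1 - N + N)
      simp only [pow_zero, mul_one]
      linarith
  | succ d ih =>
    obtain ⟨c, hc, x₀, h⟩ := ih
    refine ⟨c * (1 / 2) ^ d * (1 / 4), by positivity, max (x₀ ^ 2) (Real.exp (4 * N + 1)),
      fun x hx => ?_⟩
    have hx1 := (le_max_left _ _).trans hx
    have hx2 := (le_max_right _ _).trans hx
    have hx0 : 0 < x := lt_of_lt_of_le (Real.exp_pos _) hx2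
    have hs : 0 < √x := Real.sqrt_pos.2 hx0
    have hsx : x₀ ≤ √x := Real.le_sqrt_of_sq_le hx1
    have hdiv : ∀ k ∈ Finset.Icc N ⌊√x⌋₊, 0 < (k : ℝ) ∧ √x ≤ x / k := by
      intro k hk
      rw [Finset.mem_Icc] at hk
      have hk0 : 0 < (k : ℝ) := by exact_mod_cast hN.trans hk.1
      have hk1 : (k : ℝ) ≤ √x := (Nat.le_floor_iff hs.le).1 hk.2
      refine ⟨hk0, ?_⟩
      rw [le_div_iff₀ hk0]
      nlinarith [Real.mul_self_sqrt hx0.le]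
    have h' : ∀ k : ℕ, ∃ s : Finset (Fin (d + 1) → ℕ), k ∈ Finset.Icc N ⌊√x⌋₊ →
        (∀ n ∈ s, (∀ i, N ≤ n i) ∧ ∏ i, (n i : ℝ) ≤ x / k) ∧
          c * (x / k * plog (x / k) ^ d) ≤ (s.card : ℝ) := by
      intro k
      by_cases hk : k ∈ Finset.Icc N ⌊√x⌋₊
      · obtain ⟨s, hs⟩ := h (x / k) (hsx.trans (hdiv k hk).2)
        exact ⟨s, fun _ => hs⟩
      · exact ⟨∅, fun h => absurd h hk⟩
    choose s hs' using h'
    refine ⟨((Finset.Icc N ⌊√x⌋₊).sigma s).image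
      (fun p => (Fin.cons p.1 p.2 : Fin (d + 2) → ℕ)), ?_, ?_⟩
    · intro n hn
      obtain ⟨⟨k, m⟩, hkm, rfl⟩ := Finset.mem_image.1 hn
      obtain ⟨hk, hm⟩ := Finset.mem_sigma.1 hkm
      obtain ⟨hm1, hm2⟩ := (hs' k hk).1 m hm
      refine ⟨fun i => ?_, ?_⟩
      · refine Fin.cases ?_ (fun j => ?_) i
        · simpa using (Finset.mem_Icc.1 hk).1
        · simpa using hm1 j
      · rw [Fin.prod_univ_succ]
        simp only [Fin.cons_zero, Fin.cons_succ]
        rwa [mul_comm, ← le_div_iff₀ (hdiv k hk).1]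
    · rw [Finset.card_image_of_injective, Finset.card_sigma]
      swap
      · rintro ⟨k, m⟩ ⟨k', m'⟩ hh
        obtain ⟨h1, h2⟩ := Fin.cons_inj.1 hh
        subst h1; subst h2; rfl
      push_cast
      have hhalf : (1 / 2) * plog x ≤ plog (√x) := by
        have := plog_sq_le hs
        rw [Real.sq_sqrt hx0.le] at this
        linarith
      have hterm : ∀ k ∈ Finset.Icc N ⌊√x⌋₊,
          c * x * ((1 / 2) * plog x) ^ d * (1 / k) ≤ ((s k).card : ℝ) := by
        intro k hk
        refine le_trans ?_ (hs' k hk).2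
        have h1 : ((1 / 2) * plog x) ^ d ≤ plog (x / k) ^ d :=
          pow_le_pow_left₀ (by have := plog_pos x; positivity)
            (hhalf.trans (plog_mono (hdiv k hk).2)) d
        have h2 : 0 ≤ c * (x / k) := by have := (hdiv k hk).1; positivity
        calc _ = c * (x / k) * ((1 / 2) * plog x) ^ d := by ring
          _ ≤ c * (x / k) * plog (x / k) ^ d := mul_le_mul_of_nonneg_left h1 h2
          _ = _ := by ring
      refine le_trans ?_ (Finset.sum_le_sum hterm)
      rw [← Finset.mul_sum]
      have h1 := harmonic_lower N hx2
      have h2 : 0 ≤ c * x * ((1 / 2) * plog x) ^ d := by have := plog_pos x; positivity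
      calc _ = c * x * ((1 / 2) * plog x) ^ d * (plog x / 4) := by rw [mul_pow]; ring
        _ ≤ _ := mul_le_mul_of_nonneg_left h1 h2

/-! ### Recovering a term from rectangular partial sums -/

/-- The `d`-fold difference of the partial sums over boxes recovers a single term; it has `2^d`
summands, whence the constant. -/
lemma abs_term_le {d : ℕ} (f : (Fin d → ℕ) → ℝ) (n : Fin d → ℕ) (hn : 1 ≤ n) (B : ℝ)
    (hB : ∀ m : Fin d → ℕ, (∀ i, n i ≤ m i + 1) → m ≤ n → |∑ k ∈ Finset.Icc 1 m, f k| ≤ B) :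
    |f n| ≤ 2 ^ d * B := by
  classical
  -- The indicator of `{n}` on the box is `∏ i, (1[k i ≤ n i] - 1[k i ≤ n i - 1])`; expanding the
  -- product over subsets `t` gives signed indicators of the boxes `[1, m t]`.
  let a : (Fin d → ℕ) → Fin d → ℝ := fun k i => if k i ≤ n i then 1 else 0
  let b : (Fin d → ℕ) → Fin d → ℝ := fun k i => if k i ≤ n i - 1 then -1 else 0
  let m : Finset (Fin d) → Fin d → ℕ := fun t i => if i ∈ t then n i else n i - 1
  have hmn : ∀ t, m t ≤ n := fun t i => by
    simp only [m]; split_ifs <;> omega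
  have h1 : f n = ∑ k ∈ Finset.Icc 1 n, f k * ∏ i, (a k i + b k i) := by
    rw [Finset.sum_eq_single n]
    · rw [Finset.prod_eq_one, mul_one]
      intro i _
      have : ¬ n i ≤ n i - 1 := by have := hn i; simp at this; omega
      simp [a, b, this]
    · intro k hk hkn
      obtain ⟨i, hi⟩ := Function.ne_iff.1 hkn
      rw [Finset.mem_Icc] at hk
      have h2 : k i ≤ n i := hk.2 i
      rw [Finset.prod_eq_zero (Finset.mem_univ i), mul_zero]
      have : k i ≤ n i - 1 := by omega
      simp [a, b, this, h2]
    · intro h; exact absurd (Finset.mem_Icc.2 ⟨hn, le_rfl⟩) h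
  have h2 : ∀ t : Finset (Fin d), ∀ k ∈ Finset.Icc 1 n,
      (∏ i ∈ t, a k i) * ∏ i ∈ Finset.univ \ t, b k i =
        (-1) ^ (Finset.univ \ t).card * if k ∈ Finset.Icc 1 (m t) then 1 else 0 := by
    intro t k hk
    rw [Finset.mem_Icc] at hk
    have ha : ∏ i ∈ t, a k i = 1 := Finset.prod_eq_one fun i _ => by simp [a, hk.2 i]
    rw [ha, one_mul]
    split_ifs with hm
    · rw [Finset.mem_Icc] at hm
      rw [mul_one, ← Finset.prod_const]
      refine Finset.prod_congr rfl fun i hi => ?_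
      have h3 := hm.2 i
      simp only [Finset.mem_sdiff, Finset.mem_univ, true_and] at hi
      simp only [m, if_neg hi] at h3
      simp [b, h3]
    · rw [mul_zero]
      have : ∃ i, ¬ k i ≤ m t i := by
        by_contra hcon
        push Not at hcon
        exact hm (Finset.mem_Icc.2 ⟨hk.1, hcon⟩)
      obtain ⟨i, hi⟩ := this
      have hit : i ∉ t := fun hit => hi (by simpa [m, hit] using hk.2 i)
      simp only [m, if_neg hit] at hi
      exact Finset.prod_eq_zero (i := i) (by simp [hit]) (by simp [b, hi])
  have h3 : f n = ∑ t ∈ (Finset.univ : Finset (Fin d)).powerset,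
      (-1) ^ (Finset.univ \ t).card * ∑ k ∈ Finset.Icc 1 (m t), f k := by
    rw [h1]
    simp_rw [Finset.prod_add, Finset.mul_sum]
    rw [Finset.sum_comm]
    refine Finset.sum_congr rfl fun t _ => ?_
    rw [Finset.sum_congr rfl fun k hk => by rw [h2 t k hk]]
    rw [← Finset.sum_subset (Finset.Icc_subset_Icc_right (hmn t))]
    · refine Finset.sum_congr rfl fun k hk => ?_
      rw [if_pos hk]; ring
    · intro k _ hk
      rw [if_neg hk]; simp
  rw [h3]
  refine (Finset.abs_sum_le_sum_abs _ _).trans ?_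
  refine (Finset.sum_le_card_nsmul _ _ B ?_).trans (by simp)
  intro t _
  rw [abs_mul, abs_pow, abs_neg, abs_one, one_pow, one_mul]
  refine hB _ (fun i => ?_) (hmn t)
  simp only [m]; split_ifs <;> omega

/-! ### Consequences of negative association for tails -/

lemma NegAssocOn.neg {Ω : Type} [MeasurableSpace Ω] {μ : Measure Ω} {ι : Type}
    {X : ι → Ω → ℝ} {S : Set ι} (h : NegAssocOn μ X S) :
    NegAssocOn μ (fun i ω => -X i ω) S := by
  intro A B hA hB hAB f g hf hg h1 h2 h3
  have := h A B hA hB hAB (fun x => -f (fun i => -x i)) (fun x => -g (fun i => -x i))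
    (fun x y hxy => neg_le_neg (hf fun i => neg_le_neg (hxy i)))
    (fun x y hxy => neg_le_neg (hg fun i => neg_le_neg (hxy i)))
    h1.neg h2.neg (by simpa using h3)
  simpa [integral_neg] using this

/-- Negative association makes joint lower-tail probabilities submultiplicative. -/
lemma NegAssocOn.measure_inter_le {Ω : Type} [MeasurableSpace Ω] {μ : Measure Ω}
    [IsProbabilityMeasure μ] {ι : Type} {X : ι → Ω → ℝ} {S : Set ι} (h : NegAssocOn μ X S)
    (hm : ∀ i ∈ S, Measurable (X i)) (t : ι → ℝ) (s : Finset ι) (hs : ↑s ⊆ S) :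
    μ.real {ω | ∀ i ∈ s, X i ω ≤ t i} ≤ ∏ i ∈ s, μ.real {ω | X i ω ≤ t i} := by
  classical
  induction s using Finset.induction_on with
  | empty => simp
  | insert j s hj ih =>
    have hjS : j ∈ S := hs (by simp)
    have hsS : ↑s ⊆ S := fun i hi => hs (by simp [Finset.mem_coe.1 hi])
    rw [Finset.prod_insert hj]
    refine le_trans ?_ (mul_le_mul_of_nonneg_left (ih hsS) measureReal_nonneg)
    have mE : MeasurableSet {ω | X j ω ≤ t j} := measurableSet_le (hm j hjS) measurable_const
    have mF : MeasurableSet {ω | ∀ i ∈ s, X i ω ≤ t i} := by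
      have : {ω | ∀ i ∈ s, X i ω ≤ t i} = ⋂ i ∈ s, {ω | X i ω ≤ t i} := by ext; simp
      rw [this]
      exact Finset.measurableSet_biInter s fun i hi =>
        measurableSet_le (hm i (hsS hi)) measurable_const
    have key := h {j} s (by simpa using hjS) hsS (by simpa using hj)
      (fun x => -(if x ⟨j, by simp⟩ ≤ t j then 1 else 0))
      (fun x => -(if ∀ i : s, x i ≤ t i then 1 else 0))
      (by
        intro x y hxy
        have := hxy ⟨j, by simp⟩
        simp only
        split_ifs <;> linarith)
      (by
        intro x y hxy
        simp only
        by_cases h2 : ∀ i : s, y i ≤ t i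
        · have h1 : ∀ i : s, x i ≤ t i := fun i => (hxy i).trans (h2 i)
          rw [if_pos h1, if_pos h2]
        · rw [if_neg h2]
          split_ifs <;> norm_num)
    have e1 : (fun ω => -(if X j ω ≤ t j then (1 : ℝ) else 0)) =
        fun ω => -({ω | X j ω ≤ t j}.indicator 1 ω) := by
      ext ω; simp [Set.indicator_apply]
    have e2 : (fun ω => -(if ∀ i : s, X i ω ≤ t i then (1 : ℝ) else 0)) =
        fun ω => -({ω | ∀ i ∈ s, X i ω ≤ t i}.indicator 1 ω) := by
      ext ω; simp [Set.indicator_apply]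
    have e3 : (fun ω => -(if X j ω ≤ t j then (1 : ℝ) else 0) *
        -(if ∀ i : s, X i ω ≤ t i then (1 : ℝ) else 0)) =
        fun ω => {ω | ∀ i ∈ insert j s, X i ω ≤ t i}.indicator 1 ω := by
      ext ω
      have h0 := congrFun e1 ω
      have h1 := congrFun e2 ω
      rw [h0, h1, neg_mul_neg]
      have : {ω | ∀ i ∈ insert j s, X i ω ≤ t i} =
          {ω | X j ω ≤ t j} ∩ {ω | ∀ i ∈ s, X i ω ≤ t i} := by
        ext; simp
      rw [this, Set.inter_indicator_one, Pi.mul_apply]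
    have mG : MeasurableSet {ω | ∀ i ∈ insert j s, X i ω ≤ t i} := by
      have : {ω | ∀ i ∈ insert j s, X i ω ≤ t i} =
          {ω | X j ω ≤ t j} ∩ {ω | ∀ i ∈ s, X i ω ≤ t i} := by
        ext; simp
      rw [this]; exact mE.inter mF
    have i1 : Integrable ({ω | X j ω ≤ t j}.indicator (1 : Ω → ℝ)) μ :=
      (integrable_const (1 : ℝ)).indicator mE
    have i2 : Integrable ({ω | ∀ i ∈ s, X i ω ≤ t i}.indicator (1 : Ω → ℝ)) μ :=
      (integrable_const (1 : ℝ)).indicator mF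
    have i3 : Integrable ({ω | ∀ i ∈ insert j s, X i ω ≤ t i}.indicator (1 : Ω → ℝ)) μ :=
      (integrable_const (1 : ℝ)).indicator mG
    simp only [] at key
    rw [e1, e2, e3] at key
    have := key i1.neg i2.neg i3
    rwa [integral_neg, integral_neg, neg_mul_neg, integral_indicator_one mE,
      integral_indicator_one mF, integral_indicator_one mG] at this

/-- Borel–Cantelli type converse: if the events `X i ≤ t i` hold simultaneously with positive
probability, the complementary probabilities have bounded sums. -/
lemma NegAssocOn.sum_tail_le {Ω : Type} [MeasurableSpace Ω] {μ : Measure Ω}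
    [IsProbabilityMeasure μ] {ι : Type} {X : ι → Ω → ℝ} {S : Set ι} (h : NegAssocOn μ X S)
    (hm : ∀ i ∈ S, Measurable (X i)) (t : ι → ℝ) (s : Finset ι) (hs : ↑s ⊆ S)
    (F : Set Ω) (hF : 0 < μ.real F) (hFs : ∀ ω ∈ F, ∀ i ∈ s, X i ω ≤ t i) :
    ∑ i ∈ s, μ.real {ω | t i < X i ω} ≤ -Real.log (μ.real F) := by
  have h1 : μ.real F ≤ ∏ i ∈ s, μ.real {ω | X i ω ≤ t i} :=
    (measureReal_mono hFs).trans (h.measure_inter_le hm t s hs)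
  have h2 : ∏ i ∈ s, μ.real {ω | X i ω ≤ t i} ≤
      Real.exp (-∑ i ∈ s, μ.real {ω | t i < X i ω}) := by
    rw [← Finset.sum_neg_distrib, Real.exp_sum]
    refine Finset.prod_le_prod (fun _ _ => measureReal_nonneg) fun i hi => ?_
    have : {ω | t i < X i ω} = {ω | X i ω ≤ t i}ᶜ := by ext; simp
    rw [this, probReal_compl_eq_one_sub (measurableSet_le (hm i (hs hi)) measurable_const)]
    refine le_trans ?_ (Real.add_one_le_exp _)
    linarith
  have h3 := (Real.log_le_iff_le_exp hF).2 (h1.trans h2)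
  linarith

/-! ### The normalising constant -/

/-- The normalising constant `√(2 d |n| log log |n|)`. -/
def lilNorm {d : ℕ} (n : Fin d → ℕ) : ℝ :=
  √(2 * d * (∏ i, (n i : ℝ)) * plog (plog (∏ i, (n i : ℝ))))

lemma lilNorm_mono {d : ℕ} {m n : Fin d → ℕ} (h : m ≤ n) : lilNorm m ≤ lilNorm n := by
  have hp : ∏ i, (m i : ℝ) ≤ ∏ i, (n i : ℝ) :=
    Finset.prod_le_prod (fun _ _ => by positivity) fun i _ => by exact_mod_cast h i
  have h0 : 0 ≤ ∏ i, (m i : ℝ) := Finset.prod_nonneg fun _ _ => by positivity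
  refine Real.sqrt_le_sqrt (mul_le_mul (mul_le_mul_of_nonneg_left hp (by positivity))
    (plog_mono (plog_mono hp)) (plog_pos _).le ?_)
  exact mul_nonneg (by positivity) (h0.trans hp)

/-! ### Truncation and a weak law of large numbers -/

/-- The truncation of `x` to `[-T, T]`; it is non-decreasing, so it preserves negative
association. -/
def clamp (T x : ℝ) : ℝ := max (-T) (min x T)

lemma clamp_mono (T : ℝ) : Monotone (clamp T) := fun _ _ h =>
  max_le_max_left _ (min_le_min_right _ h)

lemma measurable_clamp (T : ℝ) : Measurable (clamp T) :=
  measurable_const.max (measurable_id.min measurable_const)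

lemma abs_clamp_le {T : ℝ} (hT : 0 ≤ T) (x : ℝ) : |clamp T x| ≤ T := by
  rw [abs_le]
  exact ⟨le_max_left _ _, max_le (by linarith) (min_le_right _ _)⟩

lemma clamp_eq_self {T x : ℝ} (h : |x| ≤ T) : clamp T x = x := by
  rw [abs_le] at h
  rw [clamp, min_eq_left h.2, max_eq_right h.1]

lemma abs_sub_clamp_le {T : ℝ} (hT : 0 ≤ T) (x : ℝ) : |x - clamp T x| ≤ |x| := by
  by_cases h : |x| ≤ T
  · rw [clamp_eq_self h]; simp
  · push Not at h
    unfold clamp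
    rcases abs_cases x with ⟨h1, h2⟩ | ⟨h1, h2⟩
    · rw [min_eq_right (by linarith), max_eq_right (by linarith), abs_of_nonneg] <;> linarith
    · rw [min_eq_left (by linarith), max_eq_left (by linarith), abs_of_nonpos] <;> linarith

/-- Truncated variables are pairwise non-positively correlated, so the variance of their sum is at
most the sum of their variances. -/
lemma variance_clamp_sum_le {Ω : Type} [MeasurableSpace Ω] {μ : Measure Ω}
    [IsProbabilityMeasure μ] {ι : Type} {X : ι → Ω → ℝ} {S : Set ι} (h : NegAssocOn μ X S)
    (hm : ∀ i ∈ S, Measurable (X i)) (s : Finset ι) (hs : ↑s ⊆ S) {T : ℝ} (hT : 0 ≤ T) :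
    ProbabilityTheory.variance (fun ω => ∑ i ∈ s, clamp T (X i ω)) μ ≤ s.card * T ^ 2 := by
  classical
  have hL : ∀ i ∈ s, MemLp (fun ω => clamp T (X i ω)) 2 μ := fun i hi =>
    MemLp.of_bound ((measurable_clamp T).comp (hm i (hs hi))).aestronglyMeasurable T
      (Eventually.of_forall fun ω => abs_clamp_le hT _)
  have hcov : ∀ i ∈ s, ∀ j ∈ s, i ≠ j →
      ProbabilityTheory.covariance (fun ω => clamp T (X i ω)) (fun ω => clamp T (X j ω)) μ ≤ 0 := by
    intro i hi j hj hij
    rw [ProbabilityTheory.covariance_eq_sub (hL i hi) (hL j hj)]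
    have := h {i} {j} (by simpa using hs hi) (by simpa using hs hj) (by simpa using hij)
      (fun x => clamp T (x ⟨i, by simp⟩)) (fun x => clamp T (x ⟨j, by simp⟩))
      (fun x y hxy => clamp_mono T (hxy _)) (fun x y hxy => clamp_mono T (hxy _))
      ((hL i hi).integrable one_le_two) ((hL j hj).integrable one_le_two)
      ((hL i hi).integrable_mul (hL j hj))
    simp only [Pi.mul_apply] at *
    linarith
  have e : (fun ω => ∑ i ∈ s, clamp T (X i ω)) = ∑ i ∈ s, fun ω => clamp T (X i ω) := by
    ext; simp
  rw [e, ProbabilityTheory.variance_sum' hL]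
  have : ∀ i ∈ s, ∑ j ∈ s, ProbabilityTheory.covariance (fun ω => clamp T (X i ω))
      (fun ω => clamp T (X j ω)) μ ≤ T ^ 2 := by
    intro i hi
    rw [← Finset.add_sum_erase s _ hi]
    have h1 : ∑ j ∈ s.erase i, ProbabilityTheory.covariance (fun ω => clamp T (X i ω))
      (fun ω => clamp T (X j ω)) μ ≤ 0 :=
      Finset.sum_nonpos fun j hj =>
        hcov i hi j (Finset.mem_of_mem_erase hj) (Finset.ne_of_mem_erase hj).symm
    have h2 : ProbabilityTheory.covariance (fun ω => clamp T (X i ω))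
      (fun ω => clamp T (X i ω)) μ ≤ T ^ 2 := by
      rw [ProbabilityTheory.covariance_self (hL i hi).aestronglyMeasurable.aemeasurable]
      refine (ProbabilityTheory.variance_le_expectation_sq
        (hL i hi).aestronglyMeasurable).trans ?_
      refine (integral_mono (hL i hi).integrable_sq (integrable_const (T ^ 2)) ?_).trans (by simp)
      intro ω
      exact sq_le_sq.2 ((abs_clamp_le hT _).trans (le_abs_self T))
    linarith
  exact (Finset.sum_le_card_nsmul _ _ _ this).trans (by simp)

/-- An `L¹` weak law of large numbers with explicit error: `T` is the truncation level. -/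
lemma weak_law {Ω : Type} [MeasurableSpace Ω] {μ : Measure Ω}
    [IsProbabilityMeasure μ] {ι : Type} {X : ι → Ω → ℝ} {S : Set ι} (h : NegAssocOn μ X S)
    (hm : ∀ i ∈ S, Measurable (X i)) (i₀ : ι) (hi₀ : i₀ ∈ S)
    (hid : ∀ i ∈ S, μ.map (X i) = μ.map (X i₀)) (hInt : Integrable (X i₀) μ)
    (s : Finset ι) (hs : ↑s ⊆ S) (hs0 : 0 < s.card) {T : ℝ} (hT : 0 ≤ T) :
    Integrable (fun ω => ∑ i ∈ s, X i ω) μ ∧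
    ∫ ω, |∑ i ∈ s, X i ω - s.card * ∫ ω, X i₀ ω ∂μ| ∂μ ≤
      2 * s.card * (∫ ω, |X i₀ ω - clamp T (X i₀ ω)| ∂μ) + √s.card * (1 + T ^ 2) / 2 := by
  have hident : ∀ i ∈ S, ProbabilityTheory.IdentDistrib (X i) (X i₀) μ μ := fun i hi =>
    ⟨(hm i hi).aemeasurable, (hm _ hi₀).aemeasurable, hid i hi⟩
  have hXi : ∀ i ∈ S, Integrable (X i) μ := fun i hi => (hident i hi).integrable_iff.2 hInt
  have hL : ∀ i ∈ S, MemLp (fun ω => clamp T (X i ω)) 2 μ := fun i hi =>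
    MemLp.of_bound ((measurable_clamp T).comp (hm i hi)).aestronglyMeasurable T
      (Eventually.of_forall fun ω => abs_clamp_le hT _)
  have hYi : ∀ i ∈ S, Integrable (fun ω => clamp T (X i ω)) μ := fun i hi =>
    (hL i hi).integrable one_le_two
  set m := ∫ ω, X i₀ ω ∂μ with hm'
  set mT := ∫ ω, clamp T (X i₀ ω) ∂μ with hmT
  set δ := ∫ ω, |X i₀ ω - clamp T (X i₀ ω)| ∂μ with hδ
  have hX : Integrable (fun ω => ∑ i ∈ s, X i ω) μ := integrable_finsetSum _ fun i hi =>
    hXi i (hs hi)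
  refine ⟨hX, ?_⟩
  set v : ℝ := (s.card : ℝ) with hv
  have hv0 : 0 < v := Nat.cast_pos.2 hs0
  have hmm : |mT - m| ≤ δ := by
    rw [hmT, hm', ← integral_sub (hYi _ hi₀) hInt]
    refine (abs_integral_le_integral_abs).trans (le_of_eq ?_)
    exact integral_congr_ae (Eventually.of_forall fun ω => abs_sub_comm _ _)
  have hdi : ∀ i ∈ S, ∫ ω, |X i ω - clamp T (X i ω)| ∂μ = δ := fun i hi =>
    ((hident i hi).comp (u := fun x => |x - clamp T x|)
      ((measurable_id.sub (measurable_clamp T)).abs)).integral_eq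
  have hmi : ∀ i ∈ S, ∫ ω, clamp T (X i ω) ∂μ = mT := fun i hi =>
    ((hident i hi).comp (measurable_clamp T)).integral_eq
  set Z : Ω → ℝ := fun ω => ∑ i ∈ s, clamp T (X i ω) with hZ
  have hZL : MemLp Z 2 μ := memLp_finsetSum _ fun i hi => hL i (hs hi)
  have hEZ : ∫ ω, Z ω ∂μ = v * mT := by
    rw [hZ, integral_finsetSum _ fun i hi => hYi i (hs hi),
      Finset.sum_congr rfl fun i hi => hmi i (hs hi)]
    simp [hv]
  have hvar := variance_clamp_sum_le h hm s hs hT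
  rw [ProbabilityTheory.variance_eq_integral hZL.aestronglyMeasurable.aemeasurable] at hvar
  change ∫ ω, (Z ω - ∫ ω, Z ω ∂μ) ^ 2 ∂μ ≤ _ at hvar
  rw [hEZ] at hvar
  have hZc : MemLp (fun ω => Z ω - v * mT) 2 μ := hZL.sub (memLp_const _)
  have hsv : 0 < √v := Real.sqrt_pos.2 hv0
  have hpt : ∀ ω, |∑ i ∈ s, X i ω - v * m| ≤ ∑ i ∈ s, |X i ω - clamp T (X i ω)| +
      (√v / 2 + (Z ω - v * mT) ^ 2 / (2 * √v)) + v * δ := by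
    intro ω
    have e : ∑ i ∈ s, X i ω - v * m =
        ∑ i ∈ s, (X i ω - clamp T (X i ω)) + (Z ω - v * mT) + v * (mT - m) := by
      rw [Finset.sum_sub_distrib, hZ]; ring
    rw [e]
    have h1 := Finset.abs_sum_le_sum_abs (fun i => X i ω - clamp T (X i ω)) s
    -- The inequality `2ab ≤ a² + b²` replaces Cauchy–Schwarz when passing from `L²` to `L¹`.
    have h2 : |Z ω - v * mT| ≤ √v / 2 + (Z ω - v * mT) ^ 2 / (2 * √v) := by
      have : √v / 2 + (Z ω - v * mT) ^ 2 / (2 * √v) - |Z ω - v * mT| =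
          (√v - |Z ω - v * mT|) ^ 2 / (2 * √v) := by
        rw [← sq_abs (Z ω - v * mT)]
        field_simp; ring
      have h3 : 0 ≤ (√v - |Z ω - v * mT|) ^ 2 / (2 * √v) := by positivity
      linarith
    have h3 : |v * (mT - m)| ≤ v * δ := by
      rw [abs_mul, abs_of_pos hv0]; exact mul_le_mul_of_nonneg_left hmm hv0.le
    linarith [abs_add_three (∑ i ∈ s, (X i ω - clamp T (X i ω))) (Z ω - v * mT) (v * (mT - m))]
  have j1 : Integrable (fun ω => ∑ i ∈ s, |X i ω - clamp T (X i ω)|) μ :=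
    integrable_finsetSum _ fun i hi => ((hXi i (hs hi)).sub (hYi i (hs hi))).abs
  have j2 : Integrable (fun ω => (Z ω - v * mT) ^ 2 / (2 * √v)) μ := hZc.integrable_sq.div_const _
  have j3 : Integrable (fun ω => √v / 2 + (Z ω - v * mT) ^ 2 / (2 * √v)) μ :=
    (integrable_const _).add j2
  refine (integral_mono (hX.sub (integrable_const _)).abs
    ((j1.add j3).add (integrable_const (v * δ))) hpt).trans ?_
  rw [integral_add' (j1.add j3) (integrable_const (v * δ)), integral_add' j1 j3,
    integral_add (integrable_const _) j2, integral_div,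
    integral_finsetSum (f := fun i ω => |X i ω - clamp T (X i ω)|) _
      fun i hi => ((hXi i (hs hi)).sub (hYi i (hs hi))).abs,
    Finset.sum_congr rfl fun i hi => hdi i (hs hi)]
  simp only [integral_const, probReal_univ, one_smul, Finset.sum_const, nsmul_eq_mul]
  have h5 : (∫ ω, (Z ω - v * mT) ^ 2 ∂μ) / (2 * √v) ≤ √v * T ^ 2 / 2 := by
    rw [div_le_iff₀ (by positivity)]
    calc _ ≤ v * T ^ 2 := hvar
      _ = (√v * √v) * T ^ 2 := by rw [Real.mul_self_sqrt hv0.le]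
      _ = _ := by ring
  rw [← integral_div] at h5
  linarith

/-! ### From tail sums to moments, and the mean -/

/-- Up to a constant, the moment function is dominated by one plus the number of indices `n` with
`M * lilNorm n < y`. -/
lemma moment_pointwise (d N : ℕ) (hN : 1 ≤ N) (M : ℝ) : ∃ C : ℝ, 0 ≤ C ∧ ∀ y : ℝ,
    0 ≤ y → ∃ s : Finset (Fin (d + 1) → ℕ),
      (∀ n ∈ s, (∀ i, N ≤ n i) ∧ M * lilNorm n < y) ∧
        y ^ 2 * plog y ^ d / plog (plog y) ≤ C * (s.card + 1) := by
  obtain ⟨c, hc, x₀, hcount⟩ := count_lower N hN d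
  set A : ℝ := 4 * (d + 1) * M ^ 2 + 1 with hA
  have hA1 : 1 ≤ A := by
    have : 0 ≤ 4 * ((d : ℝ) + 1) * M ^ 2 := by positivity
    linarith
  set y₁ : ℝ := max (4 * A ^ 2) (max x₀ 1) with hy₁
  have hy1 : 1 ≤ y₁ := (le_max_right _ _).trans (le_max_right _ _)
  have hp1 := plog_pos y₁
  refine ⟨A / c + y₁ ^ 2 * plog y₁ ^ d, by positivity, fun y hy => ?_⟩
  have hpy := plog_pos y
  have hLL := one_le_plog (plog y)
  rcases le_total y y₁ with hle | hge
  · refine ⟨∅, by simp, ?_⟩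
    have h1 : y ^ 2 * plog y ^ d / plog (plog y) ≤ y ^ 2 * plog y ^ d :=
      div_le_self (by positivity) hLL
    have h2 : y ^ 2 * plog y ^ d ≤ y₁ ^ 2 * plog y₁ ^ d :=
      mul_le_mul (pow_le_pow_left₀ hy hle 2) (pow_le_pow_left₀ hpy.le (plog_mono hle) d)
        (by positivity) (by positivity)
    have h3 : 0 ≤ A / c := by positivity
    simp only [Finset.card_empty, Nat.cast_zero, zero_add, mul_one]
    linarith
  · have hyA : 4 * A ^ 2 ≤ y := (le_max_left _ _).trans hge
    have hyx : x₀ ≤ y := (le_max_left _ _).trans ((le_max_right _ _).trans hge)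
    have hy1' : 1 ≤ y := hy1.trans hge
    have hALL : A * plog (plog y) ≤ y := by
      have h1 : plog (plog y) ≤ 2 * √y :=
        (plog_le_self (one_le_plog y)).trans (plog_le_two_mul_sqrt hy1')
      have h2 : 2 * A ≤ √y := Real.le_sqrt_of_sq_le (by nlinarith)
      have h3 := Real.mul_self_sqrt hy
      nlinarith [Real.sqrt_nonneg y]
    -- `x` is chosen so that `|n| ≤ x` forces `M * lilNorm n < y`, while still `y ≤ x`.
    set x : ℝ := y ^ 2 / (A * plog (plog y)) with hx
    have hden : 0 < A * plog (plog y) := by positivity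
    have hxy : y ≤ x := by
      rw [hx, le_div_iff₀ hden]; nlinarith
    have hx0 : 0 < x := by linarith
    have hxy2 : x ≤ y ^ 2 := div_le_self (by positivity) (by nlinarith)
    obtain ⟨s, hs1, hs2⟩ := hcount x (hyx.trans hxy)
    refine ⟨s, fun n hn => ⟨(hs1 n hn).1, ?_⟩, ?_⟩
    · have hP := (hs1 n hn).2
      set P : ℝ := ∏ i, (n i : ℝ) with hPdef
      have hP0 : 0 ≤ P := Finset.prod_nonneg fun _ _ => by positivity
      have hLP : plog (plog P) ≤ 2 * plog (plog y) :=
        (plog_mono ((plog_mono (hP.trans hxy2)).trans (plog_sq_le (by linarith)))).trans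
          (plog_two_mul_le hpy)
      have hPP := plog_pos (plog P)
      have hsq : lilNorm n ^ 2 = 2 * (d + 1) * P * plog (plog P) := by
        rw [lilNorm, Real.sq_sqrt (by rw [← hPdef]; positivity)]
        push_cast; rw [← hPdef]
      have hb : 2 * (d + 1) * P * plog (plog P) ≤ 2 * (d + 1) * x * (2 * plog (plog y)) :=
        mul_le_mul (mul_le_mul_of_nonneg_left hP (by positivity)) hLP hPP.le (by positivity)
      have hxA : x * (A * plog (plog y)) = y ^ 2 := div_mul_cancel₀ _ hden.ne'
      refine lt_of_pow_lt_pow_left₀ 2 hy ?_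
      rw [mul_pow, hsq, ← hxA]
      have hb' := mul_le_mul_of_nonneg_left hb (sq_nonneg M)
      have hpos : 0 < x * plog (plog y) := by positivity
      rw [hA]
      nlinarith
    · have h1 : plog y ^ d ≤ plog x ^ d := pow_le_pow_left₀ hpy.le (plog_mono hxy) d
      have e : y ^ 2 * plog y ^ d / plog (plog y) = A * (x * plog y ^ d) := by
        rw [hx]; field_simp
      rw [e]
      have h2 : A * (x * plog y ^ d) ≤ A * (x * plog x ^ d) := by gcongr
      have h3 : A * (x * plog x ^ d) ≤ A / c * s.card := by
        rw [show A / c * (s.card : ℝ) = A * s.card / c by ring, le_div_iff₀ hc]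
        calc _ = A * (c * (x * plog x ^ d)) := by ring
          _ ≤ _ := mul_le_mul_of_nonneg_left hs2 (by linarith)
      have h4 : 0 ≤ A / c := by positivity
      have h5 : 0 ≤ y₁ ^ 2 * plog y₁ ^ d * ((s.card : ℝ) + 1) := by positivity
      linarith

/-- Summing the pointwise domination over all indices (Tonelli): bounded tail sums give the moment
condition. -/
lemma moment_integrable {Ω : Type} [MeasurableSpace Ω] {μ : Measure Ω} [IsProbabilityMeasure μ]
    (d N : ℕ) (hN : 1 ≤ N) (M : ℝ) (Y : Ω → ℝ) (hY : Measurable Y) (K : ℝ)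
    (hK : ∀ s : Finset (Fin (d + 1) → ℕ), (∀ n ∈ s, ∀ i, N ≤ n i) →
      ∑ n ∈ s, μ.real {ω | M * lilNorm n < |Y ω|} ≤ K) :
    Integrable (fun ω => Y ω ^ 2 * plog |Y ω| ^ d / plog (plog |Y ω|)) μ := by
  classical
  obtain ⟨C, hC, hpt⟩ := moment_pointwise d N hN M
  let E : (Fin (d + 1) → ℕ) → Set Ω := fun n =>
    {ω | (∀ i, N ≤ n i) ∧ M * lilNorm n < |Y ω|}
  have hE : ∀ n, MeasurableSet (E n) := fun n =>
    (MeasurableSet.const _).inter (measurableSet_lt measurable_const hY.abs)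
  have hsum : ∑' n, μ (E n) ≤ ENNReal.ofReal K := by
    rw [ENNReal.tsum_eq_iSup_sum]
    refine iSup_le fun s => ?_
    have h1 : ∑ n ∈ s, μ (E n) = ∑ n ∈ s with (∀ i, N ≤ n i), μ (E n) := by
      rw [Finset.sum_filter]
      refine Finset.sum_congr rfl fun n _ => ?_
      split_ifs with h
      · rfl
      · simp [E, h]
    rw [h1]
    have h2 := hK (s.filter fun n => ∀ i, N ≤ n i) (fun n hn => (Finset.mem_filter.1 hn).2)
    refine le_trans (le_of_eq ?_) (ENNReal.ofReal_le_ofReal h2)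
    rw [ENNReal.ofReal_sum_of_nonneg fun _ _ => measureReal_nonneg]
    refine Finset.sum_congr rfl fun n hn => ?_
    rw [ofReal_measureReal]
    congr 1
    ext ω
    have := (Finset.mem_filter.1 hn).2
    simp only [E]
    constructor
    · exact fun h => h.2
    · exact fun h => ⟨this, h⟩
  have hmeas : Measurable fun ω => Y ω ^ 2 * plog |Y ω| ^ d / plog (plog |Y ω|) :=
    ((hY.pow_const 2).mul ((measurable_plog.comp hY.abs).pow_const d)).div
      (measurable_plog.comp (measurable_plog.comp hY.abs))
  have hnn : ∀ ω, 0 ≤ Y ω ^ 2 * plog |Y ω| ^ d / plog (plog |Y ω|) := fun ω => by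
    have h1 := plog_pos |Y ω|
    have h2 := plog_pos (plog |Y ω|)
    positivity
  refine ⟨hmeas.aestronglyMeasurable, ?_⟩
  rw [hasFiniteIntegral_iff_ofReal (Eventually.of_forall hnn)]
  have hle : ∀ ω, ENNReal.ofReal (Y ω ^ 2 * plog |Y ω| ^ d / plog (plog |Y ω|)) ≤
      ENNReal.ofReal C * (∑' n, (E n).indicator 1 ω + 1) := by
    intro ω
    obtain ⟨s, hs1, hs2⟩ := hpt |Y ω| (abs_nonneg _)
    rw [sq_abs] at hs2
    refine (ENNReal.ofReal_le_ofReal hs2).trans ?_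
    rw [ENNReal.ofReal_mul hC, ENNReal.ofReal_add (by positivity) zero_le_one,
      ENNReal.ofReal_natCast, ENNReal.ofReal_one]
    gcongr
    refine le_trans (le_of_eq ?_) (ENNReal.sum_le_tsum s)
    rw [Finset.sum_congr rfl fun n hn =>
      (Set.indicator_of_mem (show ω ∈ E n from hs1 n hn) (1 : Ω → ENNReal))]
    simp
  refine lt_of_le_of_lt (lintegral_mono hle) ?_
  have hms : ∀ n, Measurable ((E n).indicator (1 : Ω → ENNReal)) := fun n =>
    measurable_one.indicator (hE n)
  rw [lintegral_const_mul _ ((Measurable.tsum hms).add_const 1),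
    lintegral_add_right _ measurable_const, lintegral_tsum fun n => (hms n).aemeasurable]
  simp only [lintegral_indicator_one (hE _), lintegral_const, measure_univ, mul_one]
  exact ENNReal.mul_lt_top ENNReal.ofReal_lt_top
    (ENNReal.add_lt_top.2 ⟨hsum.trans_lt ENNReal.ofReal_lt_top, ENNReal.one_lt_top⟩)

/-- The moment condition is stronger than integrability. -/
lemma abs_le_moment (d : ℕ) (y : ℝ) :
    |y| ≤ 1 + y ^ 2 * plog |y| ^ d / plog (plog |y|) := by
  have hp := one_le_plog |y|
  have hpp := plog_pos (plog |y|)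
  rcases le_total |y| 1 with h | h
  · have : 0 ≤ y ^ 2 * plog |y| ^ d / plog (plog |y|) := by positivity
    linarith
  · have h1 : plog (plog |y|) ≤ |y| := (plog_le_self hp).trans (plog_le_self h)
    have h2 : |y| ≤ y ^ 2 * plog |y| ^ d / plog (plog |y|) := by
      rw [le_div_iff₀ hpp, ← sq_abs]
      have : 1 ≤ plog |y| ^ d := one_le_pow₀ hp
      have h0 := abs_nonneg y
      calc |y| * plog (plog |y|) ≤ |y| * |y| := mul_le_mul_of_nonneg_left h1 h0
        _ = |y| ^ 2 * 1 := by ring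
        _ ≤ _ := mul_le_mul_of_nonneg_left this (by positivity)
    linarith

/-- On the diagonal the normalising constant is `o(|n|)`. -/
lemma lilNorm_const_div_le (d k : ℕ) (hk : 1 ≤ k) :
    lilNorm (fun _ : Fin d => k) ≤
      (k ^ d : ℝ) * √(4 * d / √(k ^ d : ℝ)) := by
  have hw : (1 : ℝ) ≤ (k : ℝ) ^ d := one_le_pow₀ (by exact_mod_cast hk)
  simp only [lilNorm, Finset.prod_const, Finset.card_univ, Fintype.card_fin]
  set w : ℝ := (k : ℝ) ^ d
  have hw0 : 0 < w := by linarith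
  have hLL : plog (plog w) ≤ 2 * √w := (plog_le_self (one_le_plog w)).trans
    (plog_le_two_mul_sqrt hw)
  have hs : 0 < √w := Real.sqrt_pos.2 hw0
  refine Real.sqrt_le_iff.2 ⟨by positivity, ?_⟩
  rw [mul_pow, Real.sq_sqrt (by positivity)]
  calc 2 * d * w * plog (plog w) ≤ 2 * d * w * (2 * √w) :=
        mul_le_mul_of_nonneg_left hLL (by positivity)
    _ = w ^ 2 * (4 * d / √w) := by
        field_simp
        rw [Real.sq_sqrt hw0.le]; ring

/-- On an event of positive probability the partial sums are `o(|n|)` along the diagonal, so the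
weak law forces the mean to vanish. -/
lemma mean_zero {Ω : Type} [MeasurableSpace Ω] {μ : Measure Ω} [IsProbabilityMeasure μ]
    (d : ℕ) (hd : d ≠ 0) {X : (Fin d → ℕ) → Ω → ℝ}
    (hmeas : ∀ k : Fin d → ℕ, 1 ≤ k → Measurable (X k))
    (hNA : NegAssocOn μ X (Set.Ici 1))
    (hid : ∀ k : Fin d → ℕ, 1 ≤ k → μ.map (X k) = μ.map (X 1))
    (hInt : Integrable (X 1) μ) (N : ℕ) (hN : 1 ≤ N) (M : ℝ) (hM : 0 ≤ M)
    (F : Set Ω) (hF : MeasurableSet F) (hF0 : 0 < μ.real F)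
    (hFS : ∀ ω ∈ F, ∀ n : Fin d → ℕ, (∀ i, N ≤ n i) →
      |∑ k ∈ Finset.Icc 1 n, X k ω| ≤ M * lilNorm n) :
    ∫ ω, X 1 ω ∂μ = 0 := by
  set m := ∫ ω, X 1 ω ∂μ with hm
  -- `δ T` is the `L¹` truncation error at level `T`; it tends to `0`.
  let δ : ℝ → ℝ := fun T => ∫ ω, |X 1 ω - clamp T (X 1 ω)| ∂μ
  have hfin : ∀ T : ℝ, 0 ≤ T → ∀ k : ℕ, N ≤ k →
      |m| * μ.real F ≤ 2 * δ T + (1 + T ^ 2) / 2 / √((k : ℝ) ^ d) +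
        M * √(4 * d / √((k : ℝ) ^ d)) := by
    intro T hT k hk
    have hk1 : 1 ≤ k := hN.trans hk
    set n : Fin d → ℕ := fun _ => k with hn
    have hcard : (Finset.Icc 1 n).card = k ^ d := by
      simp [Pi.card_Icc, hn]
    have hw0 : (0 : ℝ) < (k : ℝ) ^ d := by
      have : (0 : ℝ) < k := by exact_mod_cast hk1
      positivity
    obtain ⟨hS, hwl⟩ := weak_law hNA (fun i hi => hmeas i hi) 1 (le_refl (1 : Fin d → ℕ))
      (fun i hi => hid i hi) hInt (Finset.Icc 1 n)
      (fun i hi => (Finset.mem_Icc.1 (Finset.mem_coe.1 hi)).1)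
      (by rw [hcard]; positivity) hT
    rw [hcard] at hwl
    push_cast at hwl
    have hb := lilNorm_const_div_le d k hk1
    set w : ℝ := (k : ℝ) ^ d with hw
    have hlil : 0 ≤ lilNorm n := Real.sqrt_nonneg _
    have hpt : ∀ ω, F.indicator (fun _ => |m| * w) ω ≤
        |∑ i ∈ Finset.Icc 1 n, X i ω - w * m| + M * lilNorm n := by
      intro ω
      by_cases hω : ω ∈ F
      · rw [Set.indicator_of_mem hω]
        have h1 := hFS ω hω n (fun _ => hk)
        have h2 : |w * m| ≤ |∑ i ∈ Finset.Icc 1 n, X i ω - w * m| +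
            |∑ i ∈ Finset.Icc 1 n, X i ω| := by
          have := abs_sub_abs_le_abs_sub (w * m) (∑ i ∈ Finset.Icc 1 n, X i ω)
          rw [abs_sub_comm] at this
          linarith
        rw [abs_mul, abs_of_pos hw0] at h2
        linarith
      · rw [Set.indicator_of_notMem hω]
        positivity
    have hI := integral_mono ((integrable_const (|m| * w)).indicator hF)
      ((hS.sub (integrable_const (w * m))).abs.add (integrable_const (M * lilNorm n))) hpt
    rw [integral_indicator_const _ hF, integral_add' (hS.sub (integrable_const (w * m))).abs
      (integrable_const _)] at hI
    simp only [integral_const, probReal_univ, smul_eq_mul, Pi.sub_apply] at hI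
    have hs : 0 < √w := Real.sqrt_pos.2 hw0
    have h3 := mul_le_mul_of_nonneg_left hb hM
    have h4 : |m| * μ.real F * w ≤
        (2 * δ T + (1 + T ^ 2) / 2 / √w + M * √(4 * d / √w)) * w := by
      have e : (1 + T ^ 2) / 2 / √w * w = √w * (1 + T ^ 2) / 2 := by
        rw [div_mul_eq_mul_div, div_eq_iff hs.ne']
        nlinarith [Real.mul_self_sqrt hw0.le]
      rw [add_mul, add_mul, e]
      have h5 : ∫ ω, |∑ i ∈ Finset.Icc 1 n, X i ω - w * m| ∂μ ≤
        2 * w * δ T + √w * (1 + T ^ 2) / 2 := hwl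
      nlinarith
    exact le_of_mul_le_mul_right h4 hw0
  have hT : ∀ T : ℝ, 0 ≤ T → |m| * μ.real F ≤ 2 * δ T := by
    intro T hT
    have hw : Tendsto (fun k : ℕ => √((k : ℝ) ^ d)) atTop atTop :=
      Real.tendsto_sqrt_atTop.comp ((tendsto_pow_atTop hd).comp tendsto_natCast_atTop_atTop)
    have h1 : Tendsto (fun k : ℕ => 2 * δ T + (1 + T ^ 2) / 2 / √((k : ℝ) ^ d) +
        M * √(4 * d / √((k : ℝ) ^ d))) atTop (nhds (2 * δ T + 0 + M * √0)) :=
      ((tendsto_const_nhds).add (hw.const_div_atTop _)).add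
        (((Real.continuous_sqrt.tendsto 0).comp (hw.const_div_atTop _)).const_mul M)
    have h2 := ge_of_tendsto h1 ((eventually_ge_atTop N).mono fun k hk => hfin T hT k hk)
    simpa using h2
  have hδ : Tendsto (fun T : ℕ => δ T) atTop (nhds 0) := by
    have := tendsto_integral_of_dominated_convergence (μ := μ)
      (F := fun (T : ℕ) ω => |X 1 ω - clamp T (X 1 ω)|) (f := fun _ => (0 : ℝ))
      (fun ω => |X 1 ω|)
      (fun T => ((hmeas 1 le_rfl).sub
        ((measurable_clamp T).comp (hmeas 1 le_rfl))).abs.aestronglyMeasurable)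
      hInt.abs
      (fun T => Eventually.of_forall fun ω => by
        rw [Real.norm_eq_abs, abs_abs]; exact abs_sub_clamp_le (Nat.cast_nonneg T) _)
      (Eventually.of_forall fun ω => by
        obtain ⟨T₀, hT₀⟩ := exists_nat_ge |X 1 ω|
        refine tendsto_const_nhds.congr' ?_
        filter_upwards [eventually_ge_atTop T₀] with T hT
        rw [clamp_eq_self (hT₀.trans (by exact_mod_cast hT))]; simp)
    simpa using this
  have h0 : |m| * μ.real F ≤ 2 * 0 :=
    ge_of_tendsto' (hδ.const_mul 2) fun T => hT T (Nat.cast_nonneg T)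
  have : |m| ≤ 0 := by
    by_contra hcon
    push Not at hcon
    nlinarith [mul_pos hcon hF0]
  exact abs_nonpos_iff.1 this

/-! ### Necessity in the law of the iterated logarithm -/

/-- **Necessity of the moment condition for the LIL** (Theorem 3).
If `d ≥ 1` and `{X_n : n ∈ ℕ^d}` is a negatively associated field of identically
distributed random variables such that
`P( limsup_{n → ∞} |S_n| / √(2 d |n| log log |n|) < ∞ ) > 0`, then `E X_1 = 0` and
`E[X_1² log^{d-1}|X_1| / log log |X_1|] < ∞`. -/
theorem lil_necessity_na_field
    {Ω : Type} [MeasurableSpace Ω] (μ : Measure Ω) [IsProbabilityMeasure μ]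
    (d : ℕ) (hd : 1 ≤ d)
    (X : (Fin d → ℕ) → Ω → ℝ)
    (hmeas : ∀ k : Fin d → ℕ, 1 ≤ k → Measurable (X k))
    (hNA : NegAssocOn μ X (Set.Ici 1))
    (hid : ∀ k : Fin d → ℕ, 1 ≤ k → μ.map (X k) = μ.map (X 1))
    (hpos : 0 < μ {ω |
      Filter.limsup (fun n : Fin d → ℕ =>
          ((|∑ k ∈ Finset.Icc 1 n, X k ω| /
            Real.sqrt (2 * d * (∏ i, (n i : ℝ)) *
              plog (plog (∏ i, (n i : ℝ))))) : EReal))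
        Filter.atTop < (⊤ : EReal)}) :
    Integrable (X 1) μ ∧ (∫ ω, X 1 ω ∂μ) = 0 ∧
      Integrable
        (fun ω => (X 1 ω) ^ 2 * (plog |X 1 ω|) ^ (d - 1) / plog (plog |X 1 ω|)) μ := by
  -- On the limsup event the partial sums are bounded by `M * lilNorm n` for all `n ≥ N + 1`.
  let F : ℕ × ℕ → Set Ω := fun p => {ω | ∀ n : Fin d → ℕ, (∀ i, p.2 + 1 ≤ n i) →
    |∑ k ∈ Finset.Icc 1 n, X k ω| ≤ p.1 * lilNorm n}
  have hFm : ∀ p, MeasurableSet (F p) := by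
    intro p
    have e : F p = ⋂ n : Fin d → ℕ, ⋂ _ : ∀ i, p.2 + 1 ≤ n i,
        {ω | |∑ k ∈ Finset.Icc 1 n, X k ω| ≤ p.1 * lilNorm n} := by
      ext ω; simp [F]
    rw [e]
    refine MeasurableSet.iInter fun n => MeasurableSet.iInter fun _ =>
      measurableSet_le (Measurable.abs ?_) measurable_const
    exact Finset.measurable_fun_sum _ fun k hk => hmeas k (Finset.mem_Icc.1 hk).1
  have hsub : {ω | Filter.limsup (fun n : Fin d → ℕ =>
          ((|∑ k ∈ Finset.Icc 1 n, X k ω| /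
            Real.sqrt (2 * d * (∏ i, (n i : ℝ)) *
              plog (plog (∏ i, (n i : ℝ))))) : EReal))
        Filter.atTop < (⊤ : EReal)} ⊆ ⋃ p, F p := by
    intro ω hω
    obtain ⟨c, hc, -⟩ := EReal.lt_iff_exists_real_btwn.1 (show _ < (⊤ : EReal) from hω)
    obtain ⟨N₀, hN₀⟩ := eventually_atTop.1 (eventually_lt_of_limsup_lt hc)
    refine Set.mem_iUnion.2 ⟨(⌈c⌉₊, ∑ i, N₀ i), fun n hn => ?_⟩
    have hn0 : N₀ ≤ n := fun i =>
      ((Finset.single_le_sum (f := N₀) (fun _ _ => Nat.zero_le _) (Finset.mem_univ i)).trans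
        (Nat.le_succ _)).trans (hn i)
    have hlt := hN₀ n hn0
    change ((|∑ k ∈ Finset.Icc 1 n, X k ω| : ℝ) : EReal) / ((lilNorm n : ℝ) : EReal) < c at hlt
    rw [← EReal.coe_div, EReal.coe_lt_coe_iff] at hlt
    have hP : 0 < ∏ i, (n i : ℝ) := Finset.prod_pos fun i _ => by
      have := hn i
      exact_mod_cast (by omega : 0 < n i)
    have ha : 0 < lilNorm n := by
      have h1 := plog_pos (plog (∏ i, (n i : ℝ)))
      have h2 : (0 : ℝ) < d := by exact_mod_cast hd
      exact Real.sqrt_pos.2 (by positivity)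
    rw [div_lt_iff₀ ha] at hlt
    exact hlt.le.trans (mul_le_mul_of_nonneg_right (Nat.le_ceil c) ha.le)
  obtain ⟨⟨M, N⟩, hFpos⟩ : ∃ p, 0 < μ (F p) := by
    by_contra hcon
    push Not at hcon
    have : μ (⋃ p, F p) = 0 := measure_iUnion_null fun p => le_antisymm (hcon p) (zero_le)
    exact absurd (measure_mono_null hsub this) hpos.ne'
  have hFr : 0 < μ.real (F (M, N)) := ENNReal.toReal_pos hFpos.ne' (measure_ne_top _ _)
  have hFS : ∀ ω ∈ F (M, N), ∀ n : Fin d → ℕ, (∀ i, N + 1 ≤ n i) →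
      |∑ k ∈ Finset.Icc 1 n, X k ω| ≤ M * lilNorm n := fun ω hω n hn => hω n hn
  -- Differencing transfers the bound to the individual variables, for `n ≥ N + 2`.
  have hX : ∀ ω ∈ F (M, N), ∀ n : Fin d → ℕ, (∀ i, N + 2 ≤ n i) →
      |X n ω| ≤ 2 ^ d * M * lilNorm n := by
    intro ω hω n hn
    have := abs_term_le (fun k => X k ω) n (fun i => by have := hn i; simp; omega)
      (M * lilNorm n) (fun m hm1 hm2 => (hFS ω hω m fun i => by
        have := hn i; have := hm1 i; omega).trans
        (mul_le_mul_of_nonneg_left (lilNorm_mono hm2) (Nat.cast_nonneg M)))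
    rwa [← mul_assoc] at this
  have h1n : ∀ n : Fin d → ℕ, (∀ i, N + 2 ≤ n i) → n ∈ Set.Ici (1 : Fin d → ℕ) :=
    fun n hn i => by have := hn i; simp; omega
  -- Both one-sided tails are summable; identical distribution moves everything to `X 1`.
  have hK : ∀ s : Finset (Fin d → ℕ), (∀ n ∈ s, ∀ i, N + 2 ≤ n i) →
      ∑ n ∈ s, μ.real {ω | 2 ^ d * M * lilNorm n < |X 1 ω|} ≤
        -Real.log (μ.real (F (M, N))) + -Real.log (μ.real (F (M, N))) := by
    intro s hs
    have hsS : ↑s ⊆ Set.Ici (1 : Fin d → ℕ) := fun n hn => h1n n (hs n hn)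
    have hp := hNA.sum_tail_le (fun i hi => hmeas i hi) (fun n => 2 ^ d * M * lilNorm n) s hsS
      (F (M, N)) hFr (fun ω hω n hn => (le_abs_self _).trans (hX ω hω n (hs n hn)))
    have hq := hNA.neg.sum_tail_le (fun i hi => (hmeas i hi).neg)
      (fun n => 2 ^ d * M * lilNorm n) s hsS
      (F (M, N)) hFr (fun ω hω n hn => (neg_le_abs _).trans (hX ω hω n (hs n hn)))
    refine le_trans ?_ (add_le_add hp hq)
    rw [← Finset.sum_add_distrib]
    refine Finset.sum_le_sum fun n hn => ?_
    have hident : ProbabilityTheory.IdentDistrib (X n) (X 1) μ μ :=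
      ⟨(hmeas n (hsS hn)).aemeasurable, (hmeas 1 le_rfl).aemeasurable, hid n (hsS hn)⟩
    have e : μ.real {ω | 2 ^ d * M * lilNorm n < |X 1 ω|} =
        μ.real {ω | 2 ^ d * M * lilNorm n < |X n ω|} := by
      have := hident.measure_mem_eq (s := {x : ℝ | 2 ^ d * M * lilNorm n < |x|})
        (measurableSet_lt measurable_const measurable_id.abs)
      simp only [Measure.real]
      exact congrArg ENNReal.toReal this.symm
    rw [e]
    refine (measureReal_mono ?_).trans (measureReal_union_le _ _)
    intro ω hω
    exact lt_abs.1 (show 2 ^ d * (M : ℝ) * lilNorm n < |X n ω| from hω)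
  obtain ⟨d', rfl⟩ : ∃ d', d = d' + 1 := ⟨d - 1, by omega⟩
  have hmom := moment_integrable d' (N + 2) (by omega) (2 ^ (d' + 1) * M) (X 1)
    (hmeas 1 le_rfl) _ hK
  have hInt : Integrable (X 1) μ :=
    ((integrable_const (1 : ℝ)).add hmom).mono' (hmeas 1 le_rfl).aestronglyMeasurable
      (Eventually.of_forall fun ω => abs_le_moment d' (X 1 ω))
  exact ⟨hInt, mean_zero (d' + 1) (by omega) hmeas hNA hid hInt (N + 1) (by omega) M
    (Nat.cast_nonneg M) (F (M, N)) (hFm _) hFr hFS, hmom⟩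
end
end

section
/- Let {Y_k : k ≤ n}, with n ∈ ℕ^d, be a negatively associated field of random variables with zero means and finite second moments. Let T_n = Σ_{i ≤ n} Y_i and B_n² = Σ_{k ≤ n} E[Y_k²]. Then for all x > 0 and a > 0, P(T_n ≥ x) ≤ P( max_{k ≤ n} Y_k > a ) + exp( − x² / (2(ax + B_n²)) ). -/
/-!
The proof is Chernoff's method applied to the truncated variables `X_k = min (Y_k, a)`. Off the
event `max Y_k > a` the sums of `Y_k` and of `X_k` agree, so it suffices to bound `P(∑ X_k ≥ x)`.

Since `y ↦ exp (t * min y a)` is non-decreasing and bounded, negative association gives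
`E exp (t ∑ X_k) ≤ ∏ E exp (t X_k)` (`integral_prod_exp_min_le`). With `u = t * a < 1`, the
elementary inequality `exp y ≤ 1 + y + y² / (2 (1 - u))` for `y ≤ u` (`exp_le_quadratic`) and
`E Y_k = 0` bound each factor by `exp (t² E Y_k² / (2 (1 - u)))`. The choice
`t = x / (a x + B²)`, where `B² = ∑ E Y_k²`, makes `1 - u = B² / (a x + B²)`, and the exponents
add up to the claimed one.
This requires `B² > 0`; if `B² = 0`, all `Y_k` vanish almost surely and the left side is zero.
-/

open MeasureTheory Filter Finset

noncomputable section

lemma one_sub_mul_exp_le {y : ℝ} (hy : 0 ≤ y) : (1 - y) * Real.exp y ≤ 1 - y ^ 2 / 2 := by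
  have hd : ∀ z : ℝ, HasDerivAt (fun z : ℝ => (1 - z) * Real.exp z + z ^ 2 / 2)
      (z * (1 - Real.exp z)) z := by
    intro z
    have h1 : HasDerivAt (fun z : ℝ => (1 - z)) (-1) z := by
      simpa using (hasDerivAt_id z).const_sub 1
    have h2 : HasDerivAt (fun z : ℝ => z ^ 2 / 2) (2 * z / 2) z := by
      simpa using (hasDerivAt_pow 2 z).div_const 2
    exact ((h1.mul (Real.hasDerivAt_exp z)).add h2).congr_deriv (by ring)
  have hanti : AntitoneOn (fun z : ℝ => (1 - z) * Real.exp z + z ^ 2 / 2) (Set.Ici 0) := by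
    apply antitoneOn_of_deriv_nonpos (convex_Ici 0)
    · exact fun z _ => (hd z).continuousAt.continuousWithinAt
    · exact fun z _ => (hd z).differentiableAt.differentiableWithinAt
    · intro z hz
      rw [interior_Ici] at hz
      have hz0 : 0 < z := hz
      rw [(hd z).deriv]
      have := Real.one_le_exp hz0.le
      nlinarith
  have := hanti (Set.mem_Ici.mpr le_rfl) (Set.mem_Ici.mpr hy) hy
  norm_num at this
  linarith

lemma exp_le_quadratic_of_nonpos {y : ℝ} (hy : y ≤ 0) : Real.exp y ≤ 1 + y + y ^ 2 / 2 := by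
  have h := Real.quadratic_le_exp_of_nonneg (x := -y) (by linarith)
  have hmul : Real.exp y * Real.exp (-y) = 1 := by rw [← Real.exp_add]; simp
  -- `(1 + y + y²/2) (1 - y + y²/2) = 1 + y⁴/4`, so the quadratic dominates `1 / exp (-y)`.
  have hq : 0 ≤ 1 + y + y ^ 2 / 2 := by nlinarith [sq_nonneg (y + 1)]
  by_contra! hlt
  nlinarith [mul_le_mul_of_nonneg_left h hq, mul_lt_mul_of_pos_right hlt (Real.exp_pos (-y)),
    sq_nonneg (y ^ 2)]

lemma exp_le_quadratic {y u : ℝ} (hyu : y ≤ u) (hu0 : 0 ≤ u) (hu1 : u < 1) :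
    Real.exp y ≤ 1 + y + y ^ 2 / (2 * (1 - u)) := by
  have hu : 0 < 1 - u := by linarith
  rcases le_total y 0 with hy | hy
  · have : y ^ 2 / 2 ≤ y ^ 2 / (2 * (1 - u)) := by
      apply div_le_div_of_nonneg_left (sq_nonneg y) (by linarith) (by linarith)
    linarith [exp_le_quadratic_of_nonpos hy]
  · have hy1 : 0 < 1 - y := by linarith
    have h1 : Real.exp y ≤ 1 + y + y ^ 2 / (2 * (1 - y)) := by
      have h := one_sub_mul_exp_le hy
      rw [mul_comm, ← le_div_iff₀ hy1] at h
      refine h.trans (le_of_eq ?_)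
      field_simp
      ring
    have : y ^ 2 / (2 * (1 - y)) ≤ y ^ 2 / (2 * (1 - u)) := by
      apply div_le_div_of_nonneg_left (sq_nonneg y) (by linarith) (by linarith)
    linarith

/-- Truncation from above at a positive level only decreases the linear term and the square. -/
lemma exp_mul_min_le {y a t : ℝ} (ha : 0 < a) (ht : 0 ≤ t) (hta : t * a < 1) :
    Real.exp (t * min y a) ≤ 1 + t * y + t ^ 2 / (2 * (1 - t * a)) * y ^ 2 := by
  have h := exp_le_quadratic (y := t * min y a) (u := t * a)
    (mul_le_mul_of_nonneg_left (min_le_right y a) ht) (by positivity) hta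
  have h1 : t * min y a ≤ t * y := mul_le_mul_of_nonneg_left (min_le_left y a) ht
  have h2 : (min y a) ^ 2 ≤ y ^ 2 := by
    rcases le_total y a with hy | hy
    · rw [min_eq_left hy]
    · rw [min_eq_right hy]; nlinarith
  have hu : 0 < 1 - t * a := by linarith
  have hc : 0 ≤ t ^ 2 / (2 * (1 - t * a)) := by positivity
  have h3 : (t * min y a) ^ 2 / (2 * (1 - t * a)) = t ^ 2 / (2 * (1 - t * a)) * (min y a) ^ 2 := by
    ring
  have h4 := mul_le_mul_of_nonneg_left h2 hc
  linarith

lemma monotone_exp_mul_min {a t : ℝ} (ht : 0 ≤ t) :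
    Monotone (fun y : ℝ => Real.exp (t * min y a)) := by
  intro y z hyz
  exact Real.exp_le_exp.mpr (mul_le_mul_of_nonneg_left (min_le_min_right a hyz) ht)

lemma integrable_prod_exp_min {Ω : Type} [MeasurableSpace Ω] {μ : Measure Ω}
    [IsProbabilityMeasure μ] {ι : Type} {Y : ι → Ω → ℝ} {s : Finset ι}
    (hmeas : ∀ k ∈ s, Measurable (Y k)) {t : ℝ} (ht : 0 ≤ t) (a : ℝ) :
    Integrable (fun ω => ∏ k ∈ s, Real.exp (t * min (Y k ω) a)) μ := by
  refine Integrable.of_bound (C := ∏ _k ∈ s, Real.exp (t * a)) ?_ (ae_of_all _ fun ω => ?_)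
  · refine Measurable.aestronglyMeasurable (Finset.measurable_fun_prod s fun k hk => ?_)
    exact Real.measurable_exp.comp (((hmeas k hk).min measurable_const).const_mul t)
  · rw [Real.norm_of_nonneg (Finset.prod_nonneg fun k _ => (Real.exp_pos _).le)]
    refine Finset.prod_le_prod (fun k _ => (Real.exp_pos _).le) fun k _ => ?_
    exact Real.exp_le_exp.mpr (mul_le_mul_of_nonneg_left (min_le_right _ _) ht)

/-- Submultiplicativity of the exponential moments of truncated negatively associated variables,
obtained by splitting off one variable at a time. -/
lemma integral_prod_exp_min_le {Ω : Type} [MeasurableSpace Ω] {μ : Measure Ω}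
    [IsProbabilityMeasure μ] {ι : Type} {Y : ι → Ω → ℝ} {S : Set ι} (hNA : NegAssocOn μ Y S)
    {t : ℝ} (ht : 0 ≤ t) (a : ℝ) (s : Finset ι) (hs : ↑s ⊆ S)
    (hmeas : ∀ k ∈ s, Measurable (Y k)) :
    ∫ ω, ∏ k ∈ s, Real.exp (t * min (Y k ω) a) ∂μ ≤
      ∏ k ∈ s, ∫ ω, Real.exp (t * min (Y k ω) a) ∂μ := by
  classical
  induction s using Finset.induction_on with
  | empty => simp
  | insert k s hk ih =>
    have hsS : ↑s ⊆ S := fun j hj => hs (Finset.mem_insert_of_mem hj)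
    have hkS : ((({k} : Finset ι)) : Set ι) ⊆ S := by
      intro j hj
      rw [Finset.coe_singleton, Set.mem_singleton_iff] at hj
      exact hj ▸ hs (Finset.mem_insert_self k s)
    have hms : ∀ j ∈ s, Measurable (Y j) := fun j hj => hmeas j (Finset.mem_insert_of_mem hj)
    have hmk : ∀ j ∈ ({k} : Finset ι), Measurable (Y j) := by
      intro j hj
      rw [Finset.mem_singleton.mp hj]
      exact hmeas k (Finset.mem_insert_self k s)
    have hB : ∀ ω, ∏ j : s, Real.exp (t * min (Y j ω) a)
        = ∏ j ∈ s, Real.exp (t * min (Y j ω) a) := fun ω =>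
      Finset.prod_coe_sort s fun j => Real.exp (t * min (Y j ω) a)
    have h := hNA {k} s hkS hsS (Finset.disjoint_singleton_left.mpr hk)
      (fun y => Real.exp (t * min (y ⟨k, Finset.mem_singleton_self k⟩) a))
      (fun y => ∏ j, Real.exp (t * min (y j) a))
      (fun y z hyz => monotone_exp_mul_min ht (hyz _))
      (fun y z hyz => Finset.prod_le_prod (fun j _ => (Real.exp_pos _).le)
        fun j _ => monotone_exp_mul_min ht (hyz j))
    simp only [hB] at h
    have hik := integrable_prod_exp_min (μ := μ) hmk ht a
    have hall := integrable_prod_exp_min (μ := μ) hmeas ht a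
    simp only [Finset.prod_singleton] at hik
    simp only [Finset.prod_insert hk] at hall ⊢
    refine (h hik (integrable_prod_exp_min hms ht a) hall).trans ?_
    exact mul_le_mul_of_nonneg_left (ih hsS hms) (integral_nonneg fun ω => (Real.exp_pos _).le)

lemma integral_exp_min_le {Ω : Type} [MeasurableSpace Ω] {μ : Measure Ω}
    [IsProbabilityMeasure μ] {Y : Ω → ℝ} (hY : Measurable Y) (hmean : ∫ ω, Y ω ∂μ = 0)
    (hL2 : Integrable (fun ω => (Y ω) ^ 2) μ) {a t : ℝ} (ha : 0 < a) (ht : 0 ≤ t)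
    (hta : t * a < 1) :
    ∫ ω, Real.exp (t * min (Y ω) a) ∂μ ≤
      Real.exp (t ^ 2 / (2 * (1 - t * a)) * ∫ ω, (Y ω) ^ 2 ∂μ) := by
  have hint : Integrable Y μ :=
    ((memLp_two_iff_integrable_sq hY.aestronglyMeasurable).mpr hL2).integrable (by norm_num)
  have hexp : Integrable (fun ω => Real.exp (t * min (Y ω) a)) μ := by
    simpa using integrable_prod_exp_min (μ := μ) (Y := fun _ : Unit => Y) (s := {()})
      (fun _ _ => hY) ht a
  have hlin : Integrable (fun ω => 1 + t * Y ω) μ := (integrable_const 1).add (hint.const_mul t)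
  have hquad := hL2.const_mul (t ^ 2 / (2 * (1 - t * a)))
  calc ∫ ω, Real.exp (t * min (Y ω) a) ∂μ
      ≤ ∫ ω, ((1 + t * Y ω) + t ^ 2 / (2 * (1 - t * a)) * (Y ω) ^ 2) ∂μ :=
        integral_mono hexp (hlin.add hquad) fun ω => exp_mul_min_le ha ht hta
    _ = t ^ 2 / (2 * (1 - t * a)) * ∫ ω, (Y ω) ^ 2 ∂μ + 1 := by
        rw [integral_add hlin hquad, integral_add (integrable_const 1) (hint.const_mul t),
          integral_const_mul, integral_const_mul, hmean]
        simp [add_comm]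
    _ ≤ _ := Real.add_one_le_exp _

/-- Chernoff's bound for the truncated sum, at the parameter `t = x / (a x + B)`. -/
lemma measureReal_sum_min_ge_le {Ω : Type} [MeasurableSpace Ω] {μ : Measure Ω}
    [IsProbabilityMeasure μ] {ι : Type} {Y : ι → Ω → ℝ} {S : Set ι} (hNA : NegAssocOn μ Y S)
    (s : Finset ι) (hs : ↑s ⊆ S) (hmeas : ∀ k ∈ s, Measurable (Y k))
    (hmean : ∀ k ∈ s, ∫ ω, Y k ω ∂μ = 0)
    (hL2 : ∀ k ∈ s, Integrable (fun ω => (Y k ω) ^ 2) μ)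
    {x a B : ℝ} (hx : 0 < x) (ha : 0 < a) (hB : ∑ k ∈ s, ∫ ω, (Y k ω) ^ 2 ∂μ = B)
    (hBpos : 0 < B) :
    μ.real {ω | x ≤ ∑ k ∈ s, min (Y k ω) a} ≤ Real.exp (- x ^ 2 / (2 * (a * x + B))) := by
  have hD : 0 < a * x + B := by positivity
  set t := x / (a * x + B) with ht_def
  have ht : 0 ≤ t := by positivity
  have hta : t * a < 1 := by
    rw [ht_def, div_mul_eq_mul_div, div_lt_one hD]
    linarith
  have hprod : ∀ ω, Real.exp (t * ∑ k ∈ s, min (Y k ω) a)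
      = ∏ k ∈ s, Real.exp (t * min (Y k ω) a) := fun ω => by
    rw [Finset.mul_sum, Real.exp_sum]
  have hint : Integrable (fun ω => Real.exp (t * ∑ k ∈ s, min (Y k ω) a)) μ := by
    simp only [hprod]
    exact integrable_prod_exp_min hmeas ht a
  have hmgf : ProbabilityTheory.mgf (fun ω => ∑ k ∈ s, min (Y k ω) a) μ t ≤
      Real.exp (t ^ 2 / (2 * (1 - t * a)) * B) := by
    unfold ProbabilityTheory.mgf
    simp only [hprod]
    refine (integral_prod_exp_min_le hNA ht a s hs hmeas).trans ?_
    rw [← hB, Finset.mul_sum, Real.exp_sum]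
    exact Finset.prod_le_prod (fun k _ => integral_nonneg fun ω => (Real.exp_pos _).le)
      fun k hk => integral_exp_min_le (hmeas k hk) (hmean k hk) (hL2 k hk) ha ht hta
  refine (ProbabilityTheory.measure_ge_le_exp_mul_mgf x ht hint).trans ?_
  refine (mul_le_mul_of_nonneg_left hmgf (Real.exp_pos _).le).trans (le_of_eq ?_)
  rw [← Real.exp_add]
  congr 1
  have hu : 1 - t * a = B / (a * x + B) := by
    rw [ht_def]
    field_simp
    ring
  rw [hu, ht_def]
  field_simp
  ring

/-- **Exponential inequality for sums of a negatively associated field** (Lemma 2.2).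
For all `x > 0` and `a > 0`,
`P(T_n ≥ x) ≤ P(max_{k ≤ n} Y_k > a) + exp(−x² / (2(a x + B_n²)))`. -/
theorem na_field_exponential_inequality
    {Ω : Type} [MeasurableSpace Ω] (μ : Measure Ω) [IsProbabilityMeasure μ]
    (d : ℕ) (n : Fin d → ℕ) (hn : (1 : Fin d → ℕ) ≤ n)
    (Y : (Fin d → ℕ) → Ω → ℝ)
    (hmeas : ∀ k ∈ Finset.Icc (1 : Fin d → ℕ) n, Measurable (Y k))
    (hNA : NegAssocOn μ Y (Set.Icc 1 n))
    (hmean : ∀ k ∈ Finset.Icc (1 : Fin d → ℕ) n, ∫ ω, Y k ω ∂μ = 0)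
    (hL2 : ∀ k ∈ Finset.Icc (1 : Fin d → ℕ) n, Integrable (fun ω => (Y k ω) ^ 2) μ)
    (x a : ℝ) (hx : 0 < x) (ha : 0 < a) :
    μ {ω | x ≤ ∑ i ∈ Finset.Icc (1 : Fin d → ℕ) n, Y i ω} ≤
      μ {ω | a < (Finset.Icc (1 : Fin d → ℕ) n).sup'
          (Finset.nonempty_Icc.mpr hn) (fun k => Y k ω)} +
      ENNReal.ofReal (Real.exp (- x ^ 2 /
        (2 * (a * x + ∑ k ∈ Finset.Icc (1 : Fin d → ℕ) n, ∫ ω, (Y k ω) ^ 2 ∂μ)))) := by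
  set I := Finset.Icc (1 : Fin d → ℕ) n with hI
  have hσ : ∀ k ∈ I, 0 ≤ ∫ ω, (Y k ω) ^ 2 ∂μ := fun k _ => integral_nonneg fun ω => sq_nonneg _
  rcases (Finset.sum_nonneg hσ).eq_or_lt with h0 | hpos
  · have hzero : ∀ᵐ ω ∂μ, ∀ k ∈ I, Y k ω = 0 := by
      rw [Filter.eventually_all_finset]
      intro k hk
      have h := (Finset.sum_eq_zero_iff_of_nonneg hσ).mp h0.symm k hk
      rw [integral_eq_zero_iff_of_nonneg (fun ω => sq_nonneg _) (hL2 k hk)] at h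
      filter_upwards [h] with ω hω
      simpa using hω
    have hnull : μ {ω | x ≤ ∑ i ∈ I, Y i ω} = 0 := by
      rw [measure_eq_zero_iff_ae_notMem]
      filter_upwards [hzero] with ω hω
      simp [Finset.sum_eq_zero hω, hx]
    rw [hnull]
    exact zero_le
  · have hsub : {ω | x ≤ ∑ i ∈ I, Y i ω} ⊆
        {ω | a < I.sup' (Finset.nonempty_Icc.mpr hn) (fun k => Y k ω)} ∪
          {ω | x ≤ ∑ k ∈ I, min (Y k ω) a} := by
      intro ω hω
      by_cases hmax : a < I.sup' (Finset.nonempty_Icc.mpr hn) (fun k => Y k ω)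
      · exact Or.inl hmax
      · right
        rw [not_lt, Finset.sup'_le_iff] at hmax
        have hsum : ∑ k ∈ I, min (Y k ω) a = ∑ k ∈ I, Y k ω :=
          Finset.sum_congr rfl fun k hk => min_eq_left (hmax k hk)
        simpa only [Set.mem_ofPred_eq, hsum] using hω
    refine (measure_mono hsub).trans ((measure_union_le _ _).trans ?_)
    gcongr
    rw [← ofReal_measureReal]
    exact ENNReal.ofReal_le_ofReal (measureReal_sum_min_ge_le hNA I (by rw [hI, Finset.coe_Icc])
      hmeas hmean hL2 hx ha rfl hpos)
end
end
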